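/- For every N ∈ ℕ and every W ∈ (0,1), every eigenvalue λ of the real symmetric (2N+1)×(2N+1) matrix K with entries K[n,m] = W·sinc(W(n−m)), n,m ∈ {−N,…,N}, satisfies 0 < λ < 1. -/

import Mathlib

open scoped BigOperators

/-- normalized sinc: sinc(x) = sin(πx)/(πx) for x ≠ 0, sinc(0) = 1. -/
noncomputable def sinc (x : ℝ) : ℝ :=
  if x = 0 then 1 else Real.sin (Real.pi * x) / (Real.pi * x)

/-!
For a real vector `v`, put `q t = ∑ j, v j * exp (i x_j t)`. Since `π W sinc (W y)` is the integral
of `cos (y t)` over `[0, π W]`, the quadratic form of the matrix is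
`v ⬝ K v = π⁻¹ ∫_0^{π W} |q|²`. For distinct integer nodes the value `W = 1` gives the identity
matrix, so `v ⬝ (1 - K) v = π⁻¹ ∫_{π W}^π |q|²`. Exponentials with distinct frequencies are linearly
independent and `q` is analytic, so `q` vanishes identically on no interval unless `v = 0`. Hence
both `K` and `1 - K` are positive definite.
-/

open Complex Function Matrix MeasureTheory

section Eigenvalue

variable {ι R : Type*} [Fintype ι] [CommRing R] [LinearOrder R] [StarRing R] [StarOrderedRing R]
  [IsStrictOrderedRing R]

lemma eigenvalue_pos_of_posDef {A : Matrix ι ι R} (hA : A.PosDef) {v : ι → R} (hv : v ≠ 0) {μ : R}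
    (hAv : A *ᵥ v = μ • v) : 0 < μ := by
  have hform : 0 < μ * (star v ⬝ᵥ v) := by
    simpa only [hAv, dotProduct_smul, smul_eq_mul] using hA.dotProduct_mulVec_pos hv
  exact pos_of_mul_pos_left hform (dotProduct_star_self_nonneg v)

end Eigenvalue

section Sinc

lemma sinc_eq_real_sinc (x : ℝ) : sinc x = Real.sinc (Real.pi * x) := by
  simp [sinc, Real.sinc_apply, Real.pi_ne_zero]

lemma sinc_neg (x : ℝ) : sinc (-x) = sinc x := by
  simp only [sinc_eq_real_sinc, mul_neg, Real.sinc_neg]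

lemma sinc_intCast_of_ne_zero {m : ℤ} (hm : m ≠ 0) : sinc m = 0 := by
  simp [sinc, hm, mul_comm Real.pi, Real.sin_int_mul_pi]

lemma integral_cos_mul_eq_sinc (W y : ℝ) :
    ∫ t in (0 : ℝ)..(Real.pi * W), Real.cos (y * t) = Real.pi * (W * sinc (W * y)) := by
  rcases eq_or_ne y 0 with rfl | hy
  · simp [sinc]
  rcases eq_or_ne W 0 with rfl | hW
  · simp
  rw [intervalIntegral.integral_comp_mul_left _ hy, integral_cos, sinc,
    if_neg (mul_ne_zero hW hy), mul_left_comm y, mul_comm y]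
  simp only [mul_zero, Real.sin_zero, sub_zero, smul_eq_mul]
  field_simp

end Sinc

section ExpSum

variable {ι : Type*}

lemma injective_exp_mul_ofReal : Injective fun (z : ℂ) (t : ℝ) ↦ exp (z * t) := by
  have hderiv (z : ℂ) : HasDerivAt (fun t : ℝ ↦ exp (z * t)) z 0 := by
    simpa using (((hasDerivAt_id (0 : ℂ)).const_mul z).cexp.comp_ofReal (z := 0))
  intro z w hzw
  have hz := hderiv z
  rw [show (fun t : ℝ ↦ exp (z * t)) = fun t : ℝ ↦ exp (w * t) from hzw] at hz
  exact hz.unique (hderiv w)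

lemma linearIndependent_exp_mul_ofReal {z : ι → ℂ} (hz : Injective z) :
    LinearIndependent ℂ fun i (t : ℝ) ↦ exp (z i * t) := by
  let χ (i : ι) : Multiplicative ℝ →* ℂ :=
    { toFun := fun t ↦ exp (z i * t.toAdd)
      map_one' := by simp
      map_mul' := fun s t ↦ by simp [mul_add, exp_add] }
  have hχ : Injective χ := fun i j hij ↦
    hz (injective_exp_mul_ofReal (congrArg DFunLike.coe hij))
  exact (linearIndependent_monoidHom (Multiplicative ℝ) ℂ).comp χ hχ

variable [Fintype ι]

/-- The trigonometric sum with real frequencies `x` and coefficients `c`; the frequencies need not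
be integers. Its square modulus is the density of the quadratic form of `dpssMatrix`. -/
noncomputable def expSum (x : ι → ℝ) (c : ι → ℂ) (t : ℝ) : ℂ :=
  ∑ i, c i * exp (x i * I * t)

lemma analyticOnNhd_expSum (x : ι → ℝ) (c : ι → ℂ) : AnalyticOnNhd ℝ (expSum x c) Set.univ := by
  refine ContDiff.analyticOnNhd ?_
  unfold expSum
  exact ContDiff.sum fun i _ ↦
    contDiff_const.mul (contDiff_const.mul ofRealCLM.contDiff).cexp

lemma continuous_normSq_expSum (x : ι → ℝ) (c : ι → ℂ) :
    Continuous fun t ↦ normSq (expSum x c t) := by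
  unfold expSum
  fun_prop

lemma expSum_ne_zero {x : ι → ℝ} (hx : Injective x) {c : ι → ℂ} (hc : c ≠ 0) :
    expSum x c ≠ 0 := by
  have hfreq : Injective fun i ↦ (x i : ℂ) * I :=
    (mul_left_injective₀ I_ne_zero).comp (ofReal_injective.comp hx)
  intro hzero
  refine hc (funext (Fintype.linearIndependent_iff.1 (linearIndependent_exp_mul_ofReal hfreq) c ?_))
  ext t
  simpa [expSum] using congrFun hzero t

lemma exists_mem_Ioo_expSum_ne_zero {x : ι → ℝ} (hx : Injective x) {c : ι → ℂ} (hc : c ≠ 0)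
    {a b : ℝ} (hab : a < b) : ∃ t ∈ Set.Ioo a b, expSum x c t ≠ 0 := by
  by_contra! hvanish
  obtain ⟨t, ht⟩ := Set.nonempty_Ioo.2 hab
  refine expSum_ne_zero hx hc
    ((analyticOnNhd_expSum x c).eq_of_eventuallyEq analyticOnNhd_const (z₀ := t) ?_)
  filter_upwards [Ioo_mem_nhds ht.1 ht.2] with s hs using hvanish s hs

lemma integral_normSq_expSum_pos {x : ι → ℝ} (hx : Injective x) {c : ι → ℂ} (hc : c ≠ 0)
    {a b : ℝ} (hab : a < b) : 0 < ∫ t in a..b, normSq (expSum x c t) := by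
  obtain ⟨t, ht, hne⟩ := exists_mem_Ioo_expSum_ne_zero hx hc hab
  exact intervalIntegral.integral_pos hab (continuous_normSq_expSum x c).continuousOn
    (fun _ _ ↦ normSq_nonneg _) ⟨t, Set.Ioo_subset_Icc_self ht, normSq_pos.2 hne⟩

lemma normSq_expSum_ofReal (x v : ι → ℝ) (t : ℝ) :
    normSq (expSum x (fun i ↦ (v i : ℂ)) t) =
      ∑ i, ∑ j, v i * v j * Real.cos ((x i - x j) * t) := by
  have hexp (i : ι) : exp (x i * I * t) = exp ((x i * t : ℝ) * I) := by
    push_cast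
    ring_nf
  simp only [expSum, hexp, normSq_apply, re_sum, im_sum, re_ofReal_mul, im_ofReal_mul,
    exp_ofReal_mul_I_re, exp_ofReal_mul_I_im, Finset.sum_mul_sum, ← Finset.sum_add_distrib,
    sub_mul, Real.cos_sub]
  refine Finset.sum_congr rfl fun i _ ↦ Finset.sum_congr rfl fun j _ ↦ ?_
  ring

end ExpSum

section DPSS

variable {ι : Type*}

/-- The DPSS (discrete prolate spheroidal sequence) matrix of bandwidth `W` with nodes `x`. The
classical one has nodes `-N, …, N`; here they may be arbitrary real numbers. -/
noncomputable def dpssMatrix (W : ℝ) (x : ι → ℝ) : Matrix ι ι ℝ :=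
  of fun i j ↦ W * sinc (W * (x i - x j))

lemma isHermitian_dpssMatrix (W : ℝ) (x : ι → ℝ) : (dpssMatrix W x).IsHermitian := by
  refine IsHermitian.ext fun i j ↦ ?_
  simp only [dpssMatrix, of_apply, star_trivial]
  rw [← neg_sub, mul_neg, sinc_neg]

lemma dpssMatrix_one_intCast [DecidableEq ι] {k : ι → ℤ} (hk : Injective k) :
    dpssMatrix 1 (fun i ↦ (k i : ℝ)) = 1 := by
  ext i j
  rcases eq_or_ne i j with rfl | hij
  · simp [dpssMatrix, sinc]
  · have hsinc := sinc_intCast_of_ne_zero (sub_ne_zero.2 (hk.ne hij))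
    simpa [dpssMatrix, one_apply_ne hij] using hsinc

lemma dotProduct_dpssMatrix_mulVec [Fintype ι] (W : ℝ) (x v : ι → ℝ) :
    v ⬝ᵥ dpssMatrix W x *ᵥ v =
      Real.pi⁻¹ * ∫ t in (0 : ℝ)..(Real.pi * W), normSq (expSum x (fun i ↦ (v i : ℂ)) t) := by
  have hintegral :
      ∫ t in (0 : ℝ)..(Real.pi * W), normSq (expSum x (fun i ↦ (v i : ℂ)) t) =
        ∑ i, ∑ j, v i * v j * (Real.pi * (W * sinc (W * (x i - x j)))) := by
    simp only [normSq_expSum_ofReal]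
    rw [intervalIntegral.integral_finsetSum
      fun i _ ↦ Continuous.intervalIntegrable (by fun_prop) _ _]
    refine Finset.sum_congr rfl fun i _ ↦ ?_
    rw [intervalIntegral.integral_finsetSum
      fun j _ ↦ Continuous.intervalIntegrable (by fun_prop) _ _]
    simp only [intervalIntegral.integral_const_mul, integral_cos_mul_eq_sinc]
  simp only [hintegral, dotProduct, mulVec, dpssMatrix, of_apply, Finset.mul_sum]
  refine Finset.sum_congr rfl fun i _ ↦ Finset.sum_congr rfl fun j _ ↦ ?_
  field_simp

lemma dotProduct_one_sub_dpssMatrix_mulVec [Fintype ι] [DecidableEq ι] (W : ℝ) {k : ι → ℤ}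
    (hk : Injective k) (v : ι → ℝ) :
    v ⬝ᵥ (1 - dpssMatrix W fun i ↦ (k i : ℝ)) *ᵥ v =
      Real.pi⁻¹ * ∫ t in (Real.pi * W)..Real.pi,
        normSq (expSum (fun i ↦ (k i : ℝ)) (fun i ↦ (v i : ℂ)) t) := by
  have hint (a b : ℝ) := (continuous_normSq_expSum (fun i ↦ (k i : ℝ))
    fun i ↦ (v i : ℂ)).intervalIntegrable (μ := volume) a b
  rw [← dpssMatrix_one_intCast hk, sub_mulVec, dotProduct_sub, dotProduct_dpssMatrix_mulVec,
    dotProduct_dpssMatrix_mulVec, mul_one, ← mul_sub,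
    intervalIntegral.integral_interval_sub_left (hint _ _) (hint _ _)]

theorem posDef_dpssMatrix [Finite ι] {W : ℝ} (hW : 0 < W) {x : ι → ℝ} (hx : Injective x) :
    (dpssMatrix W x).PosDef := by
  have := Fintype.ofFinite ι
  refine .of_dotProduct_mulVec_pos (isHermitian_dpssMatrix W x) fun v hv ↦ ?_
  rw [star_trivial, dotProduct_dpssMatrix_mulVec]
  have hc : (fun i ↦ (v i : ℂ)) ≠ 0 := by simpa [funext_iff] using hv
  exact mul_pos (inv_pos.2 Real.pi_pos)
    (integral_normSq_expSum_pos hx hc (mul_pos Real.pi_pos hW))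

theorem posDef_one_sub_dpssMatrix [Finite ι] [DecidableEq ι] {W : ℝ} (hW : W < 1)
    {k : ι → ℤ} (hk : Injective k) : (1 - dpssMatrix W fun i ↦ (k i : ℝ)).PosDef := by
  have := Fintype.ofFinite ι
  refine .of_dotProduct_mulVec_pos (isHermitian_one.sub (isHermitian_dpssMatrix W _)) fun v hv ↦ ?_
  rw [star_trivial, dotProduct_one_sub_dpssMatrix_mulVec W hk]
  have hc : (fun i ↦ (v i : ℂ)) ≠ 0 := by simpa [funext_iff] using hv
  exact mul_pos (inv_pos.2 Real.pi_pos) (integral_normSq_expSum_pos (Int.cast_injective.comp hk) hc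
    (mul_lt_of_lt_one_right Real.pi_pos hW))

theorem dpss_eigenvalue_mem_Ioo_general [Fintype ι] {k : ι → ℤ} (hk : Injective k)
    {W : ℝ} (hW : W ∈ Set.Ioo (0 : ℝ) 1) {K : Matrix ι ι ℝ}
    (hK : ∀ i j, K i j = W * sinc (W * ((k i : ℝ) - (k j : ℝ)))) {lam : ℝ}
    (hlam : ∃ v : ι → ℝ, v ≠ 0 ∧ K *ᵥ v = lam • v) : 0 < lam ∧ lam < 1 := by
  classical
  obtain ⟨v, hv, hKv⟩ := hlam
  obtain rfl : K = dpssMatrix W fun i ↦ (k i : ℝ) := Matrix.ext hK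
  have hcompl : (1 - dpssMatrix W fun i ↦ (k i : ℝ)) *ᵥ v = (1 - lam) • v := by
    rw [sub_mulVec, one_mulVec, hKv, sub_smul, one_smul]
  exact ⟨eigenvalue_pos_of_posDef (posDef_dpssMatrix hW.1 (Int.cast_injective.comp hk)) hv hKv,
    sub_pos.1 (eigenvalue_pos_of_posDef (posDef_one_sub_dpssMatrix hW.2 hk) hv hcompl)⟩

end DPSS

/-- every eigenvalue of the (2N+1)×(2N+1) DPSS matrix
`K[n,m] = W·sinc(W(n−m))`, `n,m ∈ {−N,…,N}`, lies strictly between 0 and 1.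
(We index rows/columns by `Fin (2N+1)` via `n = i − N`; note `(i−N) − (j−N) = i − j`.) -/
theorem dpss_eigenvalue_mem_Ioo
    (N : ℕ) (W : ℝ) (hW : W ∈ Set.Ioo (0 : ℝ) 1)
    (K : Matrix (Fin (2*N+1)) (Fin (2*N+1)) ℝ)
    (hK : ∀ i j : Fin (2*N+1),
      K i j = W * sinc (W * ((((i : ℕ) : ℝ) - (N : ℝ)) - (((j : ℕ) : ℝ) - (N : ℝ)))))
    (lam : ℝ)
    (hlam : ∃ v : Fin (2*N+1) → ℝ, v ≠ 0 ∧ K.mulVec v = lam • v) :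
    0 < lam ∧ lam < 1 := by
  have hnodes : Injective fun i : Fin (2 * N + 1) ↦ (i : ℤ) - N :=
    fun i j h ↦ by simpa [Fin.val_inj] using h
  exact dpss_eigenvalue_mem_Ioo_general hnodes hW (fun i j ↦ by simp [hK i j]) hlam
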